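/- Let n be a positive integer, let ε : Fin n → ℤˣ be a sign profile, and let i, j ∈ Fin n with i ≠ j. For an index m ∈ Fin n write P(ε, m) = ∏_{k < m} ε(k) for the product of the values of ε at all coordinates strictly preceding m, and write flipᵢ ε for the sign profile that agrees with ε away from i and takes the value −ε(i) at i. Then P(ε, i) · P(flipᵢ ε, j) = − P(ε, j) · P(flipⱼ ε, i). -/

import Mathlib

open Finset

/-- The product of the values of the sign profile `ε` at all coordinates strictly
preceding `m`. -/
def prefixProd {n : ℕ} (ε : Fin n → ℤˣ) (m : Fin n) : ℤˣ :=
  ∏ k ∈ Finset.univ.filter (fun k => k < m), ε k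

/-- The sign profile that agrees with `ε` away from `i` and takes the value `-ε i`
at `i`. -/
def flipAt {n : ℕ} (i : Fin n) (ε : Fin n → ℤˣ) : Fin n → ℤˣ :=
  Function.update ε i (-(ε i))

/-- Flipping coordinate `i` negates the prefix product at `m` exactly when `i` precedes `m`. -/
theorem prefixProd_flipAt {n : ℕ} (ε : Fin n → ℤˣ) (i m : Fin n) :
    prefixProd (flipAt i ε) m = if i < m then -prefixProd ε m else prefixProd ε m := by
  unfold prefixProd flipAt
  split_ifs with h
  · have hi : i ∈ Finset.univ.filter (fun k => k < m) := by simpa using h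
    rw [Finset.prod_update_of_mem hi, ← Finset.mul_prod_erase _ ε hi,
      Finset.sdiff_singleton_eq_erase, neg_mul]
  · have hi : i ∉ Finset.univ.filter (fun k => k < m) := by simpa using h
    rw [Finset.prod_update_of_notMem hi]

/-- Anticommutativity identity for the prefix-product sign corrections attached to
two bigons with distinct moving coordinates `i ≠ j`:
`P(ε, i) · P(flipᵢ ε, j) = − P(ε, j) · P(flipⱼ ε, i)`. -/
theorem prefixProd_flipAt_anticomm (n : ℕ) (hn : 0 < n) (ε : Fin n → ℤˣ)
    (i j : Fin n) (hij : i ≠ j) :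
    prefixProd ε i * prefixProd (flipAt i ε) j
      = - (prefixProd ε j * prefixProd (flipAt j ε) i) := by
  -- Exactly one of `i < j` and `j < i` holds, so exactly one side acquires a sign.
  rw [prefixProd_flipAt, prefixProd_flipAt]
  rcases lt_or_gt_of_ne hij with h | h
  · rw [if_pos h, if_neg h.asymm, mul_neg, mul_comm]
  · rw [if_neg h.asymm, if_pos h, mul_neg, neg_neg, mul_comm]
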